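/- For every K-tuple of strategies γ^{(K)} and every t ∈ {T+1,…,n}, the centralized posterior Π_t^{(K)}[δ_t^{(K)}] does not depend on the strategies γ^{(K)} (only on the realized observations and actions contained in δ_t^{(K)}), and satisfies the Markov recursion: with δ_{t+1}^{(K)} = {δ_t^{(K)}, y_{t-T+1}^{(K)}, u_{t-T+1}^{(K)}}, Π_{t+1}^{(K)}[δ_{t+1}^{(K)}](x_{t-T+1}) is the normalization over x_{t-T+1} of Σ_{x_{t-T}} s_{t-T+1}(x_{t-T+1} | x_{t-T}, u_{t-T}^{(K)}) · ∏_{k=1}^K q_{t-T+1}^k(y_{t-T+1}^k | x_{t-T+1}, u_{t-T}^{(K)}) · Π_t^{(K)}[δ_t^{(K)}](x_{t-T}), with initial condition Π_{T+1}^{(K)}[δ_{T+1}^{(K)}] = ℙ(X_1 = · | Y_1^{(K)} = y_1^{(K)}). In particular, the update depends only on the actions u_{t-T}^{(K)} and the new shared observations y_{t-T+1}^{(K)}, not on the strategies. -/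

import Mathlib

/-!
Decentralized stochastic network with `T`-step delayed sharing information patterns
(canonical finite-path-space formalization).

Times are 0-based: the paper's horizon `{1,…,n}` is encoded as `{0,…,n}` here
(so the paper's terminal time `n` is `n`, and paper time `t` corresponds to index `t-1`).

The sample space is the (finite) space of state/observation trajectories; given a
strategy profile the actions are determined recursively, and the probability of a
trajectory is the product of the Markovian kernels.  All posteriors (the private
posterior `Ξ` and the centralized posteriors `Π`, `Θ`) are elementary conditional
probabilities on this finite space.
-/

open Finset
open scoped BigOperators Classical

namespace DelayedSharing

/-- Canonical sample space: trajectories of states and observations over times `0,…,n`. -/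
abbrev Traj (n : ℕ) (X : Type) {K : ℕ} (Y : Fin K → Type) : Type :=
  (Fin (n + 1) → X) × (Fin (n + 1) → ∀ k, Y k)

/-- Clamped index into the horizon `{0,…,n}`. -/
def idx (n t : ℕ) : Fin (n + 1) := ⟨min t n, Nat.lt_succ_of_le (Nat.min_le_right t n)⟩

/-- A strategy profile: station `k`'s map, at each time, from full observation/action
histories to an action in the action space `U k`.  Admissibility (below) restricts the
dependence to the `T`-step delayed sharing information pattern `I_t^k`. -/
abbrev Strat {K : ℕ} (Y U : Fin K → Type) : Type :=
  ∀ k : Fin K, ℕ → (ℕ → ∀ j, Y j) → (ℕ → ∀ j, U j) → U k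

/-- A strategy of the single station `k`. -/
abbrev SStrat {K : ℕ} (Y U : Fin K → Type) (k : Fin K) : Type :=
  ℕ → (ℕ → ∀ j, Y j) → (ℕ → ∀ j, U j) → U k

variable {X : Type} {K : ℕ} {Y U : Fin K → Type}

def stateAt {n : ℕ} (ω : Traj n X Y) (t : ℕ) : X := ω.1 (idx n t)

def obsAt {n : ℕ} (ω : Traj n X Y) (t : ℕ) (k : Fin K) : Y k := ω.2 (idx n t) k

/-- `γ` is admissible for the `T`-step delayed sharing pattern: `γ k t` depends only on
`I_t^k = {Δ_t^{(K)}, Λ_t^k}`, i.e. on all stations' observations/actions up to time `t-T`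
(0-based: times `s` with `s + T ≤ t`), own observations up to `t` and own actions up to
`t-1`. -/
def Admissible (T : ℕ) (γ : Strat Y U) : Prop :=
  ∀ (k : Fin K) (t : ℕ) (y y' : ℕ → ∀ j, Y j) (u u' : ℕ → ∀ j, U j),
    (∀ s j, s + T ≤ t → y s j = y' s j) →
    (∀ s j, s + T ≤ t → u s j = u' s j) →
    (∀ s, s ≤ t → y s k = y' s k) →
    (∀ s, s < t → u s k = u' s k) →
    γ k t y u = γ k t y' u'

/-- Admissibility of a single station's strategy. -/
def SAdmissible (T : ℕ) (k : Fin K) (g : SStrat Y U k) : Prop :=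
  ∀ (t : ℕ) (y y' : ℕ → ∀ j, Y j) (u u' : ℕ → ∀ j, U j),
    (∀ s j, s + T ≤ t → y s j = y' s j) →
    (∀ s j, s + T ≤ t → u s j = u' s j) →
    (∀ s, s ≤ t → y s k = y' s k) →
    (∀ s, s < t → u s k = u' s k) →
    g t y u = g t y' u'

/-- Replace station `k`'s strategy in the profile `γ` by `g`. -/
def updStrat (γ : Strat Y U) (k : Fin K) (g : SStrat Y U k) : Strat Y U :=
  fun j => if h : j = k then (by subst h; exact g) else γ j

/-- Station `k` uses `g₁` before time `t` and `g₂` from time `t` on. -/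
def splice {k : Fin K} (g₁ g₂ : SStrat Y U k) (t : ℕ) : SStrat Y U k :=
  fun τ => if τ < t then g₁ τ else g₂ τ

variable [∀ k, Nonempty (U k)]

/-- The actions at times `< t` generated recursively by the strategy profile `γ` from the
observation path `y`. -/
noncomputable def actUpto (γ : Strat Y U) (y : ℕ → ∀ j, Y j) : ℕ → ℕ → ∀ j, U j
  | 0 => fun _ j => Classical.arbitrary (U j)
  | t + 1 => fun s => if s = t then (fun j => γ j t y (actUpto γ y t)) else actUpto γ y t s

/-- The action profile at time `t` generated by `γ` from the observation path `y`. -/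
noncomputable def act (γ : Strat Y U) (y : ℕ → ∀ j, Y j) (t : ℕ) : ∀ j, U j :=
  fun j => γ j t y (actUpto γ y t)

/-- The realized action profile along a trajectory. -/
noncomputable def actAt {n : ℕ} (γ : Strat Y U) (ω : Traj n X Y) (t : ℕ) : ∀ j, U j :=
  act γ (fun s => ω.2 (idx n s)) t

/-- The Markovian kernels and the per-stage cost of the decentralized network (0-based):
`prior` is the PMF of the initial state; `obs0 k` the PMF of station `k`'s initial
observation given the initial state; `trans t` the transition PMF from time `t` to `t+1`
given the action profile at time `t`; `obs t k` the PMF of station `k`'s observation at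
time `t+1` given the state at `t+1` and the action profile at time `t` (the observations
of the stations being conditionally independent given these); `cost t` the per-stage
cost `ℓ(t,·,·)`. -/
structure Kernels (X : Type) {K : ℕ} (Y U : Fin K → Type) where
  prior : X → ℝ
  obs0 : ∀ k : Fin K, X → Y k → ℝ
  trans : ℕ → X → (∀ j, U j) → X → ℝ
  obs : ℕ → ∀ k : Fin K, X → (∀ j, U j) → Y k → ℝ
  cost : ℕ → X → (∀ j, U j) → ℝ

variable [Fintype X] [∀ k, Fintype (Y k)]

/-- All the kernels are genuine probability mass functions. -/
def Kernels.IsPMF (M : Kernels X Y U) : Prop :=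
  (∀ x, 0 ≤ M.prior x) ∧ (∑ x, M.prior x) = 1 ∧
  (∀ (k : Fin K) x, (∀ y, 0 ≤ M.obs0 k x y) ∧ (∑ y, M.obs0 k x y) = 1) ∧
  (∀ t x u, (∀ x', 0 ≤ M.trans t x u x') ∧ (∑ x', M.trans t x u x') = 1) ∧
  (∀ t (k : Fin K) x u, (∀ y, 0 ≤ M.obs t k x u y) ∧ (∑ y, M.obs t k x u y) = 1)

/-- The probability of a trajectory under the strategy profile `γ`: the product of the
Markovian kernels along the path, the actions being generated by `γ`. -/
noncomputable def prob (n : ℕ) (M : Kernels X Y U) (γ : Strat Y U) (ω : Traj n X Y) : ℝ :=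
  M.prior (stateAt ω 0) * (∏ k, M.obs0 k (stateAt ω 0) (obsAt ω 0 k)) *
    ∏ t ∈ Finset.range n,
      (M.trans t (stateAt ω t) (actAt γ ω t) (stateAt ω (t + 1)) *
        ∏ k, M.obs t k (stateAt ω (t + 1)) (actAt γ ω t) (obsAt ω (t + 1) k))

/-- `ℙ^γ(A)` on the canonical finite path space. -/
noncomputable def Pr (n : ℕ) (M : Kernels X Y U) (γ : Strat Y U) (A : Traj n X Y → Prop) : ℝ :=
  ∑ ω : Traj n X Y, if A ω then prob n M γ ω else 0

/-- Conditional probability `ℙ^γ(A | B)`. -/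
noncomputable def condPr (n : ℕ) (M : Kernels X Y U) (γ : Strat Y U)
    (A B : Traj n X Y → Prop) : ℝ :=
  Pr n M γ (fun ω => A ω ∧ B ω) / Pr n M γ B

/-- The expected total cost `J_n(γ) = 𝔼^γ [Σ_t ℓ(t, X_t, U_t^{(K)})]`. -/
noncomputable def J (n : ℕ) (M : Kernels X Y U) (γ : Strat Y U) : ℝ :=
  ∑ ω : Traj n X Y, prob n M γ ω *
    ∑ t ∈ Finset.range (n + 1), M.cost t (stateAt ω t) (actAt γ ω t)

/-- The conditional cost-to-go from time `t` given the event `B`: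
`𝔼^γ [Σ_{τ=t}^n ℓ(τ, X_τ, U_τ^{(K)}) | B]`. -/
noncomputable def Jcond (n : ℕ) (M : Kernels X Y U) (γ : Strat Y U) (t : ℕ)
    (B : Traj n X Y → Prop) : ℝ :=
  (∑ ω : Traj n X Y,
      if B ω then prob n M γ ω * ∑ τ ∈ Finset.Icc t n, M.cost τ (stateAt ω τ) (actAt γ ω τ)
      else 0) / Pr n M γ B

/-- Person-by-person optimality of the profile `γo`. -/
noncomputable def PbPOptimal (n T : ℕ) (M : Kernels X Y U) (γo : Strat Y U) : Prop :=
  Admissible T γo ∧ ∀ (k : Fin K) (g : SStrat Y U k),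
    Admissible T (updStrat γo k g) → J n M γo ≤ J n M (updStrat γo k g)

/-- Person-by-person optimality of `γo` within the class `P` of strategy profiles. -/
noncomputable def PbPOptimalIn (n T : ℕ) (M : Kernels X Y U) (P : Strat Y U → Prop)
    (γo : Strat Y U) : Prop :=
  Admissible T γo ∧ P γo ∧ ∀ (k : Fin K) (g : SStrat Y U k),
    Admissible T (updStrat γo k g) → P (updStrat γo k g) →
      J n M γo ≤ J n M (updStrat γo k g)

/-! ### Information events: realizations of `I_t^k`, `Δ_t^{(K)}`, `Λ_t^k` -/

/-- The event `{I_t^k = i_t^k}`, where the realization `i_t^k = {δ_t^{(K)}, λ_t^k}` is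
recorded by total functions `iy, iu` (only the coordinates of the information pattern
matter). -/
def InfoEq {n : ℕ} (T : ℕ) (γ : Strat Y U) (k : Fin K) (t : ℕ)
    (iy : ℕ → ∀ j, Y j) (iu : ℕ → ∀ j, U j) (ω : Traj n X Y) : Prop :=
  (∀ s j, s + T ≤ t → obsAt ω s j = iy s j) ∧
  (∀ s j, s + T ≤ t → actAt γ ω s j = iu s j) ∧
  (∀ s, s ≤ t → obsAt ω s k = iy s k) ∧
  (∀ s, s < t → actAt γ ω s k = iu s k)

/-- The event `{Δ_t^{(K)} = δ_t^{(K)}}` (common/shared data). -/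
def CommonEq {n : ℕ} (T : ℕ) (γ : Strat Y U) (t : ℕ)
    (δy : ℕ → ∀ j, Y j) (δu : ℕ → ∀ j, U j) (ω : Traj n X Y) : Prop :=
  (∀ s j, s + T ≤ t → obsAt ω s j = δy s j) ∧
  (∀ s j, s + T ≤ t → actAt γ ω s j = δu s j)

/-- The event `{Λ_t^{-k} = λ_t^{-k}}` (private data of the other stations). -/
def PrivOthersEq {n : ℕ} (T : ℕ) (γ : Strat Y U) (k : Fin K) (t : ℕ)
    (ly : ℕ → ∀ j, Y j) (lu : ℕ → ∀ j, U j) (ω : Traj n X Y) : Prop :=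
  (∀ s j, j ≠ k → s ≤ t → t < s + T → obsAt ω s j = ly s j) ∧
  (∀ s j, j ≠ k → s < t → t < s + T → actAt γ ω s j = lu s j)

/-- The event `{Λ_t^{(K)} = λ_t^{(K)}}` (private data of all stations). -/
def PrivAllEq {n : ℕ} (T : ℕ) (γ : Strat Y U) (t : ℕ)
    (ly : ℕ → ∀ j, Y j) (lu : ℕ → ∀ j, U j) (ω : Traj n X Y) : Prop :=
  (∀ s j, s ≤ t → t < s + T → obsAt ω s j = ly s j) ∧
  (∀ s j, s < t → t < s + T → actAt γ ω s j = lu s j)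

/-- Agreement of two trajectories on the common data `Δ_t^{(K)}`. -/
def CommonAgree {n : ℕ} (T : ℕ) (γ : Strat Y U) (t : ℕ) (ω ω' : Traj n X Y) : Prop :=
  (∀ s (j : Fin K), s + T ≤ t → obsAt ω s j = obsAt ω' s j) ∧
  (∀ s (j : Fin K), s + T ≤ t → actAt γ ω s j = actAt γ ω' s j)

/-- Agreement of two trajectories on station `k`'s private data `Λ_t^k`. -/
def PrivAgree {n : ℕ} (T : ℕ) (γ : Strat Y U) (k : Fin K) (t : ℕ) (ω ω' : Traj n X Y) : Prop :=
  (∀ s, s ≤ t → t < s + T → obsAt ω s k = obsAt ω' s k) ∧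
  (∀ s, s < t → t < s + T → actAt γ ω s k = actAt γ ω' s k)

/-- Agreement of two trajectories on station `k`'s information `I_t^k`. -/
def InfoAgree {n : ℕ} (T : ℕ) (γ : Strat Y U) (k : Fin K) (t : ℕ) (ω ω' : Traj n X Y) : Prop :=
  CommonAgree T γ t ω ω' ∧
  (∀ s, s ≤ t → obsAt ω s k = obsAt ω' s k) ∧
  (∀ s, s < t → actAt γ ω s k = actAt γ ω' s k)

/-! ### Posteriors -/

/-- The private posterior `Ξ_t^k[i_t^k](x, λ_t^{-k})
 = ℙ^γ(X_t = x, Λ_t^{-k} = λ_t^{-k} | I_t^k = i_t^k)`. -/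
noncomputable def Xi (n T : ℕ) (M : Kernels X Y U) (γ : Strat Y U) (k : Fin K) (t : ℕ)
    (iy : ℕ → ∀ j, Y j) (iu : ℕ → ∀ j, U j) (x : X)
    (ly : ℕ → ∀ j, Y j) (lu : ℕ → ∀ j, U j) : ℝ :=
  condPr n M γ (fun ω => stateAt ω t = x ∧ PrivOthersEq T γ k t ly lu ω)
    (InfoEq T γ k t iy iu)

/-- The centralized posterior `Π_t^{(K)}[δ_t^{(K)}](x) = ℙ^γ(X_{t-T} = x | Δ_t^{(K)} = δ)`. -/
noncomputable def PiPost (n T : ℕ) (M : Kernels X Y U) (γ : Strat Y U) (t : ℕ)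
    (δy : ℕ → ∀ j, Y j) (δu : ℕ → ∀ j, U j) (x : X) : ℝ :=
  condPr n M γ (fun ω => stateAt ω (t - T) = x) (CommonEq T γ t δy δu)

/-- The centralized posterior
`Θ_t^{γ}[δ_t^{(K)}](x, λ_t^{(K)}) = ℙ^γ(X_t = x, Λ_t^{(K)} = λ | Δ_t^{(K)} = δ)`. -/
noncomputable def ThetaPost (n T : ℕ) (M : Kernels X Y U) (γ : Strat Y U) (t : ℕ)
    (δy : ℕ → ∀ j, Y j) (δu : ℕ → ∀ j, U j) (x : X)
    (ly : ℕ → ∀ j, Y j) (lu : ℕ → ∀ j, U j) : ℝ :=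
  condPr n M γ (fun ω => stateAt ω t = x ∧ PrivAllEq T γ t ly lu ω) (CommonEq T γ t δy δu)

/-- The realization `I_t^k = i_t^k` has positive probability under `γ`. -/
noncomputable def PosInfo (n T : ℕ) (M : Kernels X Y U) (γ : Strat Y U) (k : Fin K) (t : ℕ)
    (iy : ℕ → ∀ j, Y j) (iu : ℕ → ∀ j, U j) : Prop :=
  0 < Pr n M γ (InfoEq T γ k t iy iu)

/-- The random private posterior `Ξ_t^k[I_t^k]` evaluated along the trajectory `ω`. -/
noncomputable def XiAt (n T : ℕ) (M : Kernels X Y U) (γ : Strat Y U) (k : Fin K) (t : ℕ)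
    (ω : Traj n X Y) : X → (ℕ → ∀ j, Y j) → (ℕ → ∀ j, U j) → ℝ :=
  fun x ly lu => Xi n T M γ k t (fun s => ω.2 (idx n s)) (actAt γ ω) x ly lu

/-! ### Finite parametrization of private realizations -/

variable [∀ k, DecidableEq (Y k)] [∀ k, DecidableEq (U k)] [∀ k, Fintype (U k)]
variable [∀ k, Nonempty (Y k)]

/-- Canonical (finite) set of realizations of `Λ_t^{-k}`: pairs of functions supported on
the private windows of the stations `j ≠ k` (observations at times `s ≤ t` with
`t < s + T`; actions at times `s < t` with `t < s + T`) and equal to a fixed default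
outside. -/
noncomputable def privSet (n T : ℕ) (k : Fin K) (t : ℕ) :
    Finset ((Fin (n + 1) → ∀ j, Y j) × (Fin (n + 1) → ∀ j, U j)) :=
  Finset.univ.filter (fun p =>
    (∀ (s : Fin (n + 1)) (j : Fin K), ¬(j ≠ k ∧ s.1 ≤ t ∧ t < s.1 + T) →
        p.1 s j = Classical.arbitrary (Y j)) ∧
    (∀ (s : Fin (n + 1)) (j : Fin K), ¬(j ≠ k ∧ s.1 < t ∧ t < s.1 + T) →
        p.2 s j = Classical.arbitrary (U j)))

/-- Canonical (finite) set of realizations of `Λ_t^{(K)}` (all stations). -/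
noncomputable def privAllSet (n T t : ℕ) :
    Finset ((Fin (n + 1) → ∀ j, Y j) × (Fin (n + 1) → ∀ j, U j)) :=
  Finset.univ.filter (fun p =>
    (∀ (s : Fin (n + 1)) (j : Fin K), ¬(s.1 ≤ t ∧ t < s.1 + T) →
        p.1 s j = Classical.arbitrary (Y j)) ∧
    (∀ (s : Fin (n + 1)) (j : Fin K), ¬(s.1 < t ∧ t < s.1 + T) →
        p.2 s j = Classical.arbitrary (U j)))

/-- View the observation part of a private realization as a (ℕ-indexed) realization
function. -/
def pWinY {n : ℕ} (p : (Fin (n + 1) → ∀ j, Y j) × (Fin (n + 1) → ∀ j, U j)) :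
    ℕ → ∀ j, Y j := fun s => p.1 (idx n s)

/-- View the action part of a private realization as a realization function. -/
def pWinU {n : ℕ} (p : (Fin (n + 1) → ∀ j, Y j) × (Fin (n + 1) → ∀ j, U j)) :
    ℕ → ∀ j, U j := fun s => p.2 (idx n s)

/-- The observation history obtained by combining the realized information `iy` of
station `k` (own and common coordinates) with the private window `py` of the other
stations. -/
def mixObs {n : ℕ} (T t : ℕ) (k : Fin K) (iy : ℕ → ∀ j, Y j)
    (py : Fin (n + 1) → ∀ j, Y j) : ℕ → ∀ j, Y j :=
  fun s j => if j = k ∨ s + T ≤ t then iy s j else py (idx n s) j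

/-- The action history obtained by combining the realized information `iu` of station `k`
with the private window `pu` of the other stations. -/
def mixAct {n : ℕ} (T t : ℕ) (k : Fin K) (iu : ℕ → ∀ j, U j)
    (pu : Fin (n + 1) → ∀ j, U j) : ℕ → ∀ j, U j :=
  fun s j => if j = k ∨ s + T ≤ t then iu s j else pu (idx n s) j

/-- The action profile at time `t`: station `k` applies `u`, while each other station `j`
applies `γ_t^j(δ_t^{(K)}, λ_t^j)`, its strategy evaluated at the common data recorded in
`(iy, iu)` and its private data recorded in the window `p`. -/
noncomputable def prof {n : ℕ} (T t : ℕ) (γ : Strat Y U) (k : Fin K)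
    (iy : ℕ → ∀ j, Y j) (iu : ℕ → ∀ j, U j)
    (p : (Fin (n + 1) → ∀ j, Y j) × (Fin (n + 1) → ∀ j, U j)) (u : U k) : ∀ j, U j :=
  Function.update (fun j => γ j t (mixObs T t k iy p.1) (mixAct T t k iu p.2)) k u

/-- The observation history of all stations obtained from the common data `δy` and the
private windows `py` of all stations. -/
def mixObsAll {n : ℕ} (T t : ℕ) (δy : ℕ → ∀ j, Y j)
    (py : Fin (n + 1) → ∀ j, Y j) : ℕ → ∀ j, Y j :=
  fun s j => if s + T ≤ t then δy s j else py (idx n s) j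

/-- The action history of all stations obtained from the common data `δu` and the private
windows `pu` of all stations. -/
def mixActAll {n : ℕ} (T t : ℕ) (δu : ℕ → ∀ j, U j)
    (pu : Fin (n + 1) → ∀ j, U j) : ℕ → ∀ j, U j :=
  fun s j => if s + T ≤ t then δu s j else pu (idx n s) j

/-- The action profile `u_t^{(K)} = {γ_t^j(δ_t^{(K)}, λ_t^j)}_{j=1}^K`. -/
noncomputable def profAll {n : ℕ} (T t : ℕ) (γ : Strat Y U)
    (δy : ℕ → ∀ j, Y j) (δu : ℕ → ∀ j, U j)
    (p : (Fin (n + 1) → ∀ j, Y j) × (Fin (n + 1) → ∀ j, U j)) : ∀ j, U j :=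
  fun j => γ j t (mixObsAll T t δy p.1) (mixActAll T t δu p.2)

/-- The realization of `I_{t+1}^k` obtained from `i_t^k = (iy, iu)`, the new own
observation `y'` at time `t+1` and the private window `p` of the other stations. -/
noncomputable def newObs {n : ℕ} (T t : ℕ) (k : Fin K) (iy : ℕ → ∀ j, Y j)
    (p : (Fin (n + 1) → ∀ j, Y j) × (Fin (n + 1) → ∀ j, U j)) (y' : Y k) : ℕ → ∀ j, Y j :=
  fun s => if s = t + 1 then Function.update (fun j => iy s j) k y' else mixObs T t k iy p.1 s

/-- The action part of the realization of `I_{t+1}^k`: at time `t` station `k` applies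
`u` and the others apply their strategies. -/
noncomputable def newAct {n : ℕ} (T t : ℕ) (γ : Strat Y U) (k : Fin K)
    (iy : ℕ → ∀ j, Y j) (iu : ℕ → ∀ j, U j)
    (p : (Fin (n + 1) → ∀ j, Y j) × (Fin (n + 1) → ∀ j, U j)) (u : U k) : ℕ → ∀ j, U j :=
  fun s => if s = t then prof T t γ k iy iu p u else mixAct T t k iu p.2 s

/-! ### Dynamic programming equations (Theorem 3 (1.1)) -/

/-- The expected stage cost at time `t` under the private posterior `Ξ_t^k[i_t^k]` when
station `k` applies `u` and the other stations apply their strategies: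
`Σ_{x_t, λ_t^{-k}} ℓ(t, x_t, u_t^k, γ_t^{-k}(δ_t^{(K)}, λ_t^{-k})) Ξ_t^k[i_t^k](x_t, λ_t^{-k})`. -/
noncomputable def dpStage (n T : ℕ) (M : Kernels X Y U) (γ : Strat Y U) (k : Fin K)
    (t : ℕ) (iy : ℕ → ∀ j, Y j) (iu : ℕ → ∀ j, U j) (u : U k) : ℝ :=
  ∑ x : X, ∑ p ∈ privSet n T k t,
    M.cost t x (prof T t γ k iy iu p u) * Xi n T M γ k t iy iu x (pWinY p) (pWinU p)

/-- The expected continuation value: the function `V` at time `t+1`, evaluated at the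
updated realization `(i_t^k, y_{t+1}^k, u_t^k, y_{t-T+1}^{-k}, u_{t-T+1}^{-k})`, averaged
with the kernel
`q_{t+1}^k(dy_{t+1}^k | x_{t+1}, u) s_{t+1}(dx_{t+1} | x_t, u) Ξ_t^k[i_t^k](dx_t, dλ_t^{-k})`. -/
noncomputable def dpCont (n T : ℕ) (M : Kernels X Y U) (γ : Strat Y U) (k : Fin K)
    (t : ℕ) (iy : ℕ → ∀ j, Y j) (iu : ℕ → ∀ j, U j)
    (V : ℕ → (ℕ → ∀ j, Y j) → (ℕ → ∀ j, U j) → ℝ) (u : U k) : ℝ :=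
  ∑ y' : Y k, ∑ x : X, ∑ x' : X, ∑ p ∈ privSet n T k t,
    V (t + 1) (newObs T t k iy p y') (newAct T t γ k iy iu p u) *
      M.obs t k x' (prof T t γ k iy iu p u) y' *
      M.trans t x (prof T t γ k iy iu p u) x' *
      Xi n T M γ k t iy iu x (pWinY p) (pWinU p)

/-- `V` satisfies the dynamic programming equations of Theorem 3 (1.1) for station `k`
(with the other stations' strategies fixed to those of `γ`): at the terminal time the
minimum over the action space of the expected stage cost, and before that the minimum
over the action space of expected stage cost plus expected continuation value, on every
realization of `I_t^k` of positive probability. -/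
noncomputable def SatisfiesDP (n T : ℕ) (M : Kernels X Y U) (γ : Strat Y U) (k : Fin K)
    (V : ℕ → (ℕ → ∀ j, Y j) → (ℕ → ∀ j, U j) → ℝ) : Prop :=
  (∀ iy iu, PosInfo n T M γ k n iy iu →
      V n iy iu = ⨅ u : U k, dpStage n T M γ k n iy iu u) ∧
  (∀ t iy iu, t < n → PosInfo n T M γ k t iy iu →
      V t iy iu = ⨅ u : U k, (dpStage n T M γ k t iy iu u + dpCont n T M γ k t iy iu V u))

/-- Station `k`'s strategy in `γ` attains, at every realization of positive probability,
the minimum in the dynamic programming equations with value function `V`. -/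
noncomputable def AttainsDP (n T : ℕ) (M : Kernels X Y U) (γ : Strat Y U) (k : Fin K)
    (V : ℕ → (ℕ → ∀ j, Y j) → (ℕ → ∀ j, U j) → ℝ) : Prop :=
  (∀ iy iu, PosInfo n T M γ k n iy iu →
      V n iy iu = dpStage n T M γ k n iy iu (γ k n iy iu)) ∧
  (∀ t iy iu, t < n → PosInfo n T M γ k t iy iu →
      V t iy iu = dpStage n T M γ k t iy iu (γ k t iy iu) +
        dpCont n T M γ k t iy iu V (γ k t iy iu))

/-- The value process `𝒱_t^{γ^{k,o}, γ^{-k,o}}(i_t^k)`: the infimum, over admissible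
strategies of station `k` used from time `t` on (station `k` using `γo`'s strategy before
`t` and the other stations using `γo` throughout), of the conditional cost-to-go given
`I_t^k = i_t^k`. -/
noncomputable def Vval (n T : ℕ) (M : Kernels X Y U) (γo : Strat Y U) (k : Fin K) (t : ℕ)
    (iy : ℕ → ∀ j, Y j) (iu : ℕ → ∀ j, U j) : ℝ :=
  sInf { r : ℝ | ∃ g : SStrat Y U k,
    Admissible T (updStrat γo k (splice (γo k) g t)) ∧
    r = Jcond n M (updStrat γo k (splice (γo k) g t)) t
          (InfoEq T (updStrat γo k (splice (γo k) g t)) k t iy iu) }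

/-! ### Structured strategy classes -/

/-- Semi-separated strategies: for every station `k` and time `t`, the action depends on
the information `i_t^k` only through `(Ξ_t^k[i_t^k], δ_t^{(K)}, λ_t^k)`. -/
noncomputable def SemiSeparated (n T : ℕ) (M : Kernels X Y U) (γ : Strat Y U) : Prop :=
  ∀ (k : Fin K) (t : ℕ) (y y' : ℕ → ∀ j, Y j) (u u' : ℕ → ∀ j, U j),
    (∀ x ly lu, Xi n T M γ k t y u x ly lu = Xi n T M γ k t y' u' x ly lu) →
    (∀ s j, s + T ≤ t → y s j = y' s j) →
    (∀ s j, s + T ≤ t → u s j = u' s j) →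
    (∀ s, s ≤ t → t < s + T → y s k = y' s k) →
    (∀ s, s < t → t < s + T → u s k = u' s k) →
    γ k t y u = γ k t y' u'

/-- Separated strategies (with the centralized posterior `Π`): the action depends on
`i_t^k` only through `(Ξ_t^k[i_t^k], Π_t^{(K)}[δ_t^{(K)}], λ_t^k)`. -/
noncomputable def SeparatedPi (n T : ℕ) (M : Kernels X Y U) (γ : Strat Y U) : Prop :=
  ∀ (k : Fin K) (t : ℕ) (y y' : ℕ → ∀ j, Y j) (u u' : ℕ → ∀ j, U j),
    (∀ x ly lu, Xi n T M γ k t y u x ly lu = Xi n T M γ k t y' u' x ly lu) →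
    (∀ x, PiPost n T M γ t y u x = PiPost n T M γ t y' u' x) →
    (∀ s, s ≤ t → t < s + T → y s k = y' s k) →
    (∀ s, s < t → t < s + T → u s k = u' s k) →
    γ k t y u = γ k t y' u'

/-- Separated strategies (with the centralized posterior `Θ`): the action depends on
`i_t^k` only through `(Ξ_t^k[i_t^k], Θ_t^{γ}[δ_t^{(K)}], λ_t^k)`. -/
noncomputable def SeparatedTheta (n T : ℕ) (M : Kernels X Y U) (γ : Strat Y U) : Prop :=
  ∀ (k : Fin K) (t : ℕ) (y y' : ℕ → ∀ j, Y j) (u u' : ℕ → ∀ j, U j),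
    (∀ x ly lu, Xi n T M γ k t y u x ly lu = Xi n T M γ k t y' u' x ly lu) →
    (∀ x ly lu, ThetaPost n T M γ t y u x ly lu = ThetaPost n T M γ t y' u' x ly lu) →
    (∀ s, s ≤ t → t < s + T → y s k = y' s k) →
    (∀ s, s < t → t < s + T → u s k = u' s k) →
    γ k t y u = γ k t y' u'

/-- Information-state strategies: the action depends on `i_t^k` only through the pair
`(Ξ_t^k[i_t^k], Θ_t^{γ}[δ_t^{(K)}])`. -/
noncomputable def InfoStateTheta (n T : ℕ) (M : Kernels X Y U) (γ : Strat Y U) : Prop :=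
  ∀ (k : Fin K) (t : ℕ) (y y' : ℕ → ∀ j, Y j) (u u' : ℕ → ∀ j, U j),
    (∀ x ly lu, Xi n T M γ k t y u x ly lu = Xi n T M γ k t y' u' x ly lu) →
    (∀ x ly lu, ThetaPost n T M γ t y u x ly lu = ThetaPost n T M γ t y' u' x ly lu) →
    γ k t y u = γ k t y' u'


/-!  STATEMENT 6 (Theorem 2 (1): the centralized posterior `Π_t^{(K)}` is strategy
independent and satisfies a Markov recursion). -/

end DelayedSharing

/-!
Along the event that the observations up to time `m` equal `y`, every non-anticipative profile
plays a fixed sequence of actions `u`.  Summing the product form of the path law one step at a time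
then shows that the joint probability of this event with `X_m = x` solves the unnormalized Bayes
recursion driven by `y` and `u` alone.  An event `Δ = δ` of positive probability is such an
observation event with `u` recorded in `δ`, so the posterior is the normalized filter, and the
recursion is linear in the filter, so it survives normalization.
-/

namespace DelayedSharing

variable {X : Type} {K : ℕ} {Y U : Fin K → Type} {n T : ℕ}

/-! ### Non-anticipative strategies -/

/-- The strategies that do not look ahead in the observations, for whatever information pattern
they use of the past.  Only the observations vary, since the action histories `actUpto` fed to a
profile hold default values from the current time on. -/
def NonAnticipative (γ : Strat Y U) : Prop :=
  ∀ (k : Fin K) (t : ℕ) (y y' : ℕ → ∀ j, Y j) (u : ℕ → ∀ j, U j),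
    (∀ s ≤ t, y s = y' s) → γ k t y u = γ k t y' u

theorem Admissible.nonAnticipative {γ : Strat Y U} (hγ : Admissible T γ) : NonAnticipative γ :=
  fun k t _ _ _ h =>
    hγ k t _ _ _ _ (fun s j _ => congrFun (h s (by lia)) j) (fun _ _ _ => rfl)
      (fun s hs => congrFun (h s hs) k) (fun _ _ => rfl)

section Actions

variable [∀ k, Nonempty (U k)] {γ : Strat Y U} {y y' : ℕ → ∀ j, Y j}

theorem NonAnticipative.actUpto_congr (hγ : NonAnticipative γ) {t : ℕ}
    (h : ∀ s < t, y s = y' s) : actUpto γ y t = actUpto γ y' t := by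
  induction t with
  | zero => rfl
  | succ t ih =>
    have past : actUpto γ y t = actUpto γ y' t := ih fun s hs => h s (by lia)
    have now : ∀ j, γ j t y (actUpto γ y' t) = γ j t y' (actUpto γ y' t) :=
      fun j => hγ j t _ _ _ fun s hs => h s (by lia)
    simp only [actUpto, past, now]

theorem NonAnticipative.act_congr (hγ : NonAnticipative γ) {t : ℕ}
    (h : ∀ s ≤ t, y s = y' s) : act γ y t = act γ y' t := by
  funext j
  rw [act, act, hγ.actUpto_congr fun s hs => h s hs.le]
  exact hγ j t _ _ _ h

end Actions

/-! ### Prolonging a trajectory by one step -/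

section Extension

theorem idx_succ_of_le {t : ℕ} (ht : t ≤ n) : idx (n + 1) t = (idx n t).castSucc :=
  Fin.ext <| by simp [idx, ht, ht.trans n.le_succ]

theorem idx_self (n : ℕ) : idx n n = Fin.last n :=
  Fin.ext <| by simp [idx]

/-- The trajectory over `0,…,n+1` that continues `ω` by the state `x` and the observations `y`. -/
def Traj.snoc (ω : Traj n X Y) (x : X) (y : ∀ k, Y k) : Traj (n + 1) X Y :=
  (Fin.snoc (α := fun _ => X) ω.1 x, Fin.snoc (α := fun _ => ∀ k, Y k) ω.2 y)

variable (ω : Traj n X Y) (x : X) (y : ∀ k, Y k)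

theorem stateAt_snoc_of_le {t : ℕ} (ht : t ≤ n) : stateAt (ω.snoc x y) t = stateAt ω t := by
  simp [stateAt, Traj.snoc, idx_succ_of_le ht]

theorem obsAt_snoc_of_le {t : ℕ} (ht : t ≤ n) : obsAt (ω.snoc x y) t = obsAt ω t := by
  funext k
  simp [obsAt, Traj.snoc, idx_succ_of_le ht]

@[simp]
theorem stateAt_snoc_last : stateAt (ω.snoc x y) (n + 1) = x := by
  simp [stateAt, Traj.snoc, idx_self]

@[simp]
theorem obsAt_snoc_last : obsAt (ω.snoc x y) (n + 1) = y := by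
  funext k
  simp [obsAt, Traj.snoc, idx_self]

theorem actAt_snoc_of_le [∀ k, Nonempty (U k)] {γ : Strat Y U} (hγ : NonAnticipative γ)
    {t : ℕ} (ht : t ≤ n) : actAt γ (ω.snoc x y) t = actAt γ ω t :=
  hγ.act_congr fun _ hs => obsAt_snoc_of_le ω x y (hs.trans ht)

theorem sum_traj_succ [Fintype X] [∀ k, Fintype (Y k)] {R : Type*} [AddCommMonoid R]
    (f : Traj (n + 1) X Y → R) :
    ∑ ω, f ω = ∑ ω : Traj n X Y, ∑ x, ∑ y, f (ω.snoc x y) := by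
  let e : (X × ∀ k, Y k) × Traj n X Y ≃ Traj (n + 1) X Y :=
    (Equiv.prodProdProdComm _ _ _ _).trans
      ((Fin.snocEquiv fun _ => X).prodCongr (Fin.snocEquiv fun _ => ∀ k, Y k))
  rw [← e.sum_comp, Fintype.sum_prod_type_right]
  exact Fintype.sum_congr _ _ fun ω => Fintype.sum_prod_type _

end Extension

/-! ### The path law -/

section PathLaw

/-- The joint kernel `s_{t+1}(x' | x, u) ∏_k q_{t+1}^k(y'^k | x', u)` of the next state and the
next observations of all stations. -/
def Kernels.step (M : Kernels X Y U) (t : ℕ) (x : X) (u : ∀ j, U j) (x' : X)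
    (y' : ∀ k, Y k) : ℝ :=
  M.trans t x u x' * ∏ k, M.obs t k x' u (y' k)

theorem prob_eq_mul_prod_step [∀ k, Nonempty (U k)] (M : Kernels X Y U) (γ : Strat Y U)
    (ω : Traj n X Y) :
    prob n M γ ω = M.prior (stateAt ω 0) * (∏ k, M.obs0 k (stateAt ω 0) (obsAt ω 0 k)) *
      ∏ t ∈ range n,
        M.step t (stateAt ω t) (actAt γ ω t) (stateAt ω (t + 1)) (obsAt ω (t + 1)) :=
  rfl

theorem prob_snoc [∀ k, Nonempty (U k)] {M : Kernels X Y U} {γ : Strat Y U}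
    (hγ : NonAnticipative γ) (ω : Traj n X Y) (x : X) (y : ∀ k, Y k) :
    prob (n + 1) M γ (ω.snoc x y) =
      prob n M γ ω * M.step n (stateAt ω n) (actAt γ ω n) x y := by
  have past : ∀ t ∈ range n,
      M.step t (stateAt (ω.snoc x y) t) (actAt γ (ω.snoc x y) t) (stateAt (ω.snoc x y) (t + 1))
        (obsAt (ω.snoc x y) (t + 1)) =
      M.step t (stateAt ω t) (actAt γ ω t) (stateAt ω (t + 1)) (obsAt ω (t + 1)) := by
    intro t ht
    have ht : t < n := mem_range.1 ht
    rw [stateAt_snoc_of_le ω x y ht.le, actAt_snoc_of_le ω x y hγ ht.le,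
      stateAt_snoc_of_le ω x y ht, obsAt_snoc_of_le ω x y ht]
  rw [prob_eq_mul_prod_step, prob_eq_mul_prod_step, prod_range_succ, prod_congr rfl past,
    stateAt_snoc_of_le ω x y n.zero_le, obsAt_snoc_of_le ω x y n.zero_le,
    stateAt_snoc_of_le ω x y le_rfl, actAt_snoc_of_le ω x y hγ le_rfl, stateAt_snoc_last,
    obsAt_snoc_last, mul_assoc, mul_assoc, mul_assoc]

variable [Fintype X] [∀ k, Fintype (Y k)] {M : Kernels X Y U}

theorem Kernels.IsPMF.step_nonneg (hM : M.IsPMF) (t : ℕ) (x : X) (u : ∀ j, U j) (x' : X)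
    (y' : ∀ k, Y k) : 0 ≤ M.step t x u x' y' := by
  obtain ⟨-, -, -, htrans, hobs⟩ := hM
  exact mul_nonneg ((htrans t x u).1 x') (prod_nonneg fun k _ => (hobs t k x' u).1 (y' k))

theorem Kernels.IsPMF.sum_step (hM : M.IsPMF) (t : ℕ) (x : X) (u : ∀ j, U j) :
    ∑ x', ∑ y', M.step t x u x' y' = 1 := by
  obtain ⟨-, -, -, htrans, hobs⟩ := hM
  have sum_obs (x' : X) : ∑ y' : ∀ k, Y k, ∏ k, M.obs t k x' u (y' k) = 1 := by
    rw [← Fintype.prod_sum]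
    exact prod_eq_one fun k _ => (hobs t k x' u).2
  simp only [step, ← mul_sum, sum_obs, mul_one, (htrans t x u).2]

variable [∀ k, Nonempty (U k)] {γ : Strat Y U}

theorem Kernels.IsPMF.prob_nonneg (hM : M.IsPMF) (ω : Traj n X Y) : 0 ≤ prob n M γ ω := by
  have steps_nonneg := prod_nonneg fun t (_ : t ∈ range n) =>
    hM.step_nonneg t (stateAt ω t) (actAt γ ω t) (stateAt ω (t + 1)) (obsAt ω (t + 1))
  obtain ⟨hprior, -, hobs0, -⟩ := hM
  rw [prob_eq_mul_prod_step]
  exact mul_nonneg (mul_nonneg (hprior _) (prod_nonneg fun k _ => (hobs0 k _).1 _)) steps_nonneg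

theorem Kernels.IsPMF.Pr_mono (hM : M.IsPMF) {A B : Traj n X Y → Prop} (h : ∀ ω, A ω → B ω) :
    Pr n M γ A ≤ Pr n M γ B := by
  simp only [Pr, ← sum_filter]
  exact sum_le_sum_of_subset_of_nonneg (monotone_filter_right _ fun ω _ => h ω)
    fun ω _ _ => hM.prob_nonneg ω

theorem exists_of_Pr_pos {A : Traj n X Y → Prop} (h : 0 < Pr n M γ A) : ∃ ω, A ω := by
  by_contra! hA
  simp [Pr, hA] at h

theorem sum_Pr_stateAt_and (m : ℕ) (A : Traj n X Y → Prop) :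
    ∑ x, Pr n M γ (fun ω => stateAt ω m = x ∧ A ω) = Pr n M γ A := by
  unfold Pr
  rw [sum_comm]
  refine sum_congr rfl fun ω _ => ?_
  by_cases hA : A ω <;> simp [hA]

theorem Pr_succ (hγ : NonAnticipative γ) (A : Traj (n + 1) X Y → Prop) :
    Pr (n + 1) M γ A = ∑ ω : Traj n X Y, prob n M γ ω *
      ∑ x, ∑ y, if A (ω.snoc x y) then M.step n (stateAt ω n) (actAt γ ω n) x y else 0 := by
  simp only [Pr, sum_traj_succ, prob_snoc hγ, mul_sum, mul_ite, mul_zero]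

theorem Kernels.IsPMF.Pr_succ_of_snoc_iff (hM : M.IsPMF) (hγ : NonAnticipative γ)
    {A : Traj (n + 1) X Y → Prop} {B : Traj n X Y → Prop}
    (h : ∀ ω x y, A (ω.snoc x y) ↔ B ω) : Pr (n + 1) M γ A = Pr n M γ B := by
  rw [Pr_succ hγ, Pr]
  refine sum_congr rfl fun ω _ => ?_
  by_cases hB : B ω <;> simp [h, hB, hM.sum_step]

end PathLaw

/-! ### The unnormalized filter -/

section Filter

/-- The event that the observations of all stations at the times `0,…,m` are those of `y`. -/
def ObsUptoEq (y : ℕ → ∀ j, Y j) (m : ℕ) (ω : Traj n X Y) : Prop :=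
  ∀ s ≤ m, obsAt ω s = y s

theorem obsUptoEq_zero_iff {y : ℕ → ∀ j, Y j} {ω : Traj n X Y} :
    ObsUptoEq y 0 ω ↔ obsAt ω 0 = y 0 := by
  simp [ObsUptoEq]

theorem obsUptoEq_snoc_iff_of_le {y : ℕ → ∀ j, Y j} {m : ℕ} (hm : m ≤ n) (ω : Traj n X Y)
    (x' : X) (y' : ∀ k, Y k) : ObsUptoEq y m (ω.snoc x' y') ↔ ObsUptoEq y m ω :=
  forall₂_congr fun _ hs => by rw [obsAt_snoc_of_le ω x' y' (hs.trans hm)]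

theorem obsUptoEq_snoc_last_iff {y : ℕ → ∀ j, Y j} (ω : Traj n X Y) (x' : X)
    (y' : ∀ k, Y k) :
    ObsUptoEq y (n + 1) (ω.snoc x' y') ↔ y' = y (n + 1) ∧ ObsUptoEq y n ω := by
  rw [← obsUptoEq_snoc_iff_of_le le_rfl ω x' y']
  simp only [ObsUptoEq, Nat.le_succ_iff, or_imp, forall_and, forall_eq, obsAt_snoc_last]
  exact and_comm

theorem ObsUptoEq.actAt_eq [∀ k, Nonempty (U k)] {γ : Strat Y U} (hγ : NonAnticipative γ)
    {y : ℕ → ∀ j, Y j} {m t : ℕ} {ω : Traj n X Y} (h : ObsUptoEq y m ω) (ht : t ≤ m) :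
    actAt γ ω t = act γ y t :=
  hγ.act_congr fun s hs => h s (hs.trans ht)

variable [Fintype X]

/-- The unnormalized Bayes filter `ℙ(X_m = x, Y_{0,m} = y_{0,m})` of the state, computed from the
observations `y` when the actions are `u`; no strategy enters. -/
def unnormalizedFilter (M : Kernels X Y U) (y : ℕ → ∀ j, Y j) (u : ℕ → ∀ j, U j) : ℕ → X → ℝ
  | 0, x => M.prior x * ∏ k, M.obs0 k x (y 0 k)
  | m + 1, x' => ∑ x, M.step m x (u m) x' (y (m + 1)) * unnormalizedFilter M y u m x

theorem unnormalizedFilter_congr (M : Kernels X Y U) (y : ℕ → ∀ j, Y j)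
    {u u' : ℕ → ∀ j, U j} {m : ℕ} (h : ∀ s < m, u s = u' s) :
    unnormalizedFilter M y u m = unnormalizedFilter M y u' m := by
  induction m with
  | zero => rfl
  | succ m ih =>
    funext x'
    simp only [unnormalizedFilter, h m m.lt_succ_self, ih fun s hs => h s (by lia)]

variable [∀ k, Fintype (Y k)] [∀ k, Nonempty (U k)] {M : Kernels X Y U} {γ : Strat Y U}
  {y : ℕ → ∀ j, Y j}

theorem Pr_stateAt_and_obsUptoEq_zero (x : X) :
    Pr 0 M γ (fun ω => stateAt ω 0 = x ∧ ObsUptoEq y 0 ω) =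
      M.prior x * ∏ k, M.obs0 k x (y 0 k) := by
  have event_iff (ω : Traj 0 X Y) :
      stateAt ω 0 = x ∧ ObsUptoEq y 0 ω ↔ ω = (fun _ => x, fun _ => y 0) := by
    simp [obsUptoEq_zero_iff, Prod.ext_iff, funext_iff, stateAt, obsAt, idx]
  simp only [Pr, event_iff]
  simp [prob, stateAt, obsAt]

theorem Pr_stateAt_and_obsUptoEq_succ (hγ : NonAnticipative γ) (x' : X) :
    Pr (n + 1) M γ (fun ω => stateAt ω (n + 1) = x' ∧ ObsUptoEq y (n + 1) ω) =
      ∑ x, M.step n x (act γ y n) x' (y (n + 1)) *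
        Pr n M γ (fun ω => stateAt ω n = x ∧ ObsUptoEq y n ω) := by
  rw [Pr_succ hγ]
  simp only [Pr, mul_sum]
  conv_rhs => rw [sum_comm]
  refine sum_congr rfl fun ω _ => ?_
  by_cases h : ObsUptoEq y n ω
  · simp [obsUptoEq_snoc_last_iff, h, ite_and, h.actAt_eq hγ le_rfl, mul_comm]
  · simp [obsUptoEq_snoc_last_iff, h]

theorem Pr_stateAt_and_obsUptoEq (hM : M.IsPMF) (hγ : NonAnticipative γ) {m : ℕ} (hm : m ≤ n)
    (x : X) :
    Pr n M γ (fun ω => stateAt ω m = x ∧ ObsUptoEq y m ω) =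
      unnormalizedFilter M y (act γ y) m x := by
  induction n, hm using Nat.le_induction with
  | base =>
    induction m generalizing x with
    | zero => exact Pr_stateAt_and_obsUptoEq_zero x
    | succ m ih => simp only [Pr_stateAt_and_obsUptoEq_succ hγ, ih, unnormalizedFilter]
  | succ n hm ih =>
    rw [← ih]
    exact hM.Pr_succ_of_snoc_iff hγ fun ω x' y' => by
      rw [stateAt_snoc_of_le ω x' y' hm, obsUptoEq_snoc_iff_of_le hm]

end Filter

/-! ### The centralized posterior -/

section Posterior

variable [∀ k, Nonempty (U k)] {γ : Strat Y U} {δy : ℕ → ∀ j, Y j} {δu : ℕ → ∀ j, U j} {m : ℕ}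

theorem commonEq_add_iff (hγ : NonAnticipative γ) (ω : Traj n X Y) :
    CommonEq T γ (m + T) δy δu ω ↔ ObsUptoEq δy m ω ∧ ∀ s ≤ m, act γ δy s = δu s := by
  have event_iff : CommonEq T γ (m + T) δy δu ω ↔
      ObsUptoEq δy m ω ∧ ∀ s ≤ m, actAt γ ω s = δu s := by
    simp only [CommonEq, ObsUptoEq, add_le_add_iff_right, funext_iff]
    tauto
  rw [event_iff]
  refine and_congr_right fun h => forall₂_congr fun s hs => ?_
  rw [h.actAt_eq hγ hs]

theorem CommonEq.mono {t t' : ℕ} (htt' : t ≤ t') {ω : Traj n X Y}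
    (h : CommonEq T γ t' δy δu ω) : CommonEq T γ t δy δu ω :=
  ⟨fun s j hs => h.1 s j (hs.trans htt'), fun s j hs => h.2 s j (hs.trans htt')⟩

variable [Fintype X] [∀ k, Fintype (Y k)] {M : Kernels X Y U}

theorem act_eq_of_Pr_commonEq_pos (hγ : NonAnticipative γ)
    (hpos : 0 < Pr n M γ (CommonEq T γ (m + T) δy δu)) : ∀ s ≤ m, act γ δy s = δu s := by
  obtain ⟨ω, hω⟩ := exists_of_Pr_pos hpos
  exact ((commonEq_add_iff hγ ω).1 hω).2

theorem commonEq_eq_obsUptoEq_of_Pr_pos (hγ : NonAnticipative γ)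
    (hpos : 0 < Pr n M γ (CommonEq T γ (m + T) δy δu)) :
    CommonEq (X := X) (n := n) T γ (m + T) δy δu = ObsUptoEq δy m :=
  funext fun ω => propext <| (commonEq_add_iff hγ ω).trans <|
    and_iff_left (act_eq_of_Pr_commonEq_pos hγ hpos)

theorem PiPost_eq_condPr_obsUptoEq (hγ : NonAnticipative γ)
    (hpos : 0 < Pr n M γ (CommonEq T γ (m + T) δy δu)) (x : X) :
    PiPost n T M γ (m + T) δy δu x =
      condPr n M γ (fun ω => stateAt ω m = x) (ObsUptoEq δy m) := by
  rw [PiPost, commonEq_eq_obsUptoEq_of_Pr_pos hγ hpos, Nat.add_sub_cancel]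

theorem Pr_stateAt_and_commonEq (hM : M.IsPMF) (hγ : NonAnticipative γ) (hm : m ≤ n)
    (hpos : 0 < Pr n M γ (CommonEq T γ (m + T) δy δu)) (x : X) :
    Pr n M γ (fun ω => stateAt ω m = x ∧ CommonEq T γ (m + T) δy δu ω) =
      unnormalizedFilter M δy δu m x := by
  rw [commonEq_eq_obsUptoEq_of_Pr_pos hγ hpos, Pr_stateAt_and_obsUptoEq hM hγ hm,
    unnormalizedFilter_congr M δy fun s hs => act_eq_of_Pr_commonEq_pos hγ hpos s hs.le]

theorem Pr_commonEq (hM : M.IsPMF) (hγ : NonAnticipative γ) (hm : m ≤ n)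
    (hpos : 0 < Pr n M γ (CommonEq T γ (m + T) δy δu)) :
    Pr n M γ (CommonEq T γ (m + T) δy δu) = ∑ x, unnormalizedFilter M δy δu m x := by
  simp only [← sum_Pr_stateAt_and m (CommonEq T γ (m + T) δy δu),
    Pr_stateAt_and_commonEq hM hγ hm hpos]

theorem PiPost_eq_unnormalizedFilter_div (hM : M.IsPMF) (hγ : NonAnticipative γ) (hm : m ≤ n)
    (hpos : 0 < Pr n M γ (CommonEq T γ (m + T) δy δu)) (x : X) :
    PiPost n T M γ (m + T) δy δu x =
      unnormalizedFilter M δy δu m x / ∑ z, unnormalizedFilter M δy δu m z := by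
  rw [PiPost, condPr, Nat.add_sub_cancel, Pr_stateAt_and_commonEq hM hγ hm hpos,
    Pr_commonEq hM hγ hm hpos]

theorem PiPost_zero_add (hγ : NonAnticipative γ)
    (hpos : 0 < Pr n M γ (CommonEq T γ (0 + T) δy δu)) (x : X) :
    PiPost n T M γ (0 + T) δy δu x =
      condPr n M γ (fun ω => stateAt ω 0 = x) (fun ω => ∀ j, obsAt ω 0 j = δy 0 j) := by
  rw [PiPost_eq_condPr_obsUptoEq hγ hpos]
  simp only [← funext_iff, ← obsUptoEq_zero_iff]

theorem PiPost_succ_add (hM : M.IsPMF) (hγ : NonAnticipative γ) (hm : m < n)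
    (hpos : 0 < Pr n M γ (CommonEq T γ (m + 1 + T) δy δu)) (x' : X) :
    PiPost n T M γ (m + 1 + T) δy δu x' =
      (∑ x, M.step m x (δu m) x' (δy (m + 1)) * PiPost n T M γ (m + T) δy δu x) /
        ∑ x'', ∑ x, M.step m x (δu m) x'' (δy (m + 1)) * PiPost n T M γ (m + T) δy δu x := by
  have hpos' : 0 < Pr n M γ (CommonEq T γ (m + T) δy δu) :=
    hpos.trans_le <| hM.Pr_mono fun ω => CommonEq.mono (by lia)
  have hne : ∑ x, unnormalizedFilter M δy δu m x ≠ 0 := by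
    rw [← Pr_commonEq hM hγ hm.le hpos']
    exact hpos'.ne'
  rw [PiPost_eq_unnormalizedFilter_div hM hγ hm hpos]
  simp only [PiPost_eq_unnormalizedFilter_div hM hγ hm.le hpos', ← mul_div_assoc, ← sum_div,
    div_div_div_cancel_right₀ hne, unnormalizedFilter]

end Posterior

theorem centralized_posterior_Pi_recursion_general
    [Fintype X] [∀ k, Fintype (Y k)] [∀ k, Nonempty (U k)]
    (n T : ℕ) (M : Kernels X Y U) (hM : M.IsPMF) :
    (∀ (γ₁ γ₂ : Strat Y U), NonAnticipative γ₁ → NonAnticipative γ₂ →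
      ∀ (t : ℕ) (δy : ℕ → ∀ j, Y j) (δu : ℕ → ∀ j, U j), T ≤ t → t ≤ n + T →
        0 < Pr n M γ₁ (CommonEq T γ₁ t δy δu) →
        0 < Pr n M γ₂ (CommonEq T γ₂ t δy δu) →
        ∀ x : X, PiPost n T M γ₁ t δy δu x = PiPost n T M γ₂ t δy δu x) ∧
    (∀ (γ : Strat Y U), NonAnticipative γ →
      ∀ (δy : ℕ → ∀ j, Y j) (δu : ℕ → ∀ j, U j),
        0 < Pr n M γ (CommonEq T γ T δy δu) →
        ∀ x : X, PiPost n T M γ T δy δu x =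
          condPr n M γ (fun ω => stateAt ω 0 = x)
            (fun ω => ∀ j : Fin K, obsAt ω 0 j = δy 0 j)) ∧
    (∀ (γ : Strat Y U), NonAnticipative γ →
      ∀ (t : ℕ) (δy : ℕ → ∀ j, Y j) (δu : ℕ → ∀ j, U j), T ≤ t → t < n + T →
        0 < Pr n M γ (CommonEq T γ (t + 1) δy δu) →
        ∀ x' : X,
          PiPost n T M γ (t + 1) δy δu x' =
            (∑ x : X, M.trans (t - T) x (δu (t - T)) x' *
                (∏ j, M.obs (t - T) j x' (δu (t - T)) (δy (t - T + 1) j)) *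
                PiPost n T M γ t δy δu x) /
            (∑ x'' : X, ∑ x : X, M.trans (t - T) x (δu (t - T)) x'' *
                (∏ j, M.obs (t - T) j x'' (δu (t - T)) (δy (t - T + 1) j)) *
                PiPost n T M γ t δy δu x)) := by
  refine ⟨?_, ?_, ?_⟩
  · intro γ₁ γ₂ hγ₁ hγ₂ t δy δu hTt ht hpos₁ hpos₂ x
    obtain ⟨m, rfl⟩ := Nat.exists_eq_add_of_le' hTt
    have hm : m ≤ n := by lia
    rw [PiPost_eq_unnormalizedFilter_div hM hγ₁ hm hpos₁,
      PiPost_eq_unnormalizedFilter_div hM hγ₂ hm hpos₂]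
  · intro γ hγ δy δu hpos x
    rw [← PiPost_zero_add (T := T) hγ (by rwa [T.zero_add]), T.zero_add]
  · intro γ hγ t δy δu hTt ht hpos x'
    obtain ⟨m, rfl⟩ := Nat.exists_eq_add_of_le' hTt
    rw [Nat.add_right_comm] at hpos ⊢
    rw [Nat.add_sub_cancel]
    exact PiPost_succ_add hM hγ (by lia) hpos x'


/-- The centralized posterior `Π_t^{(K)}[δ_t^{(K)}](x) = ℙ^{γ^{(K)}}(X_{t-T} = x | Δ_t^{(K)})`
does not depend on the strategy profile (only on the realized data in `δ_t^{(K)}`), its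
initial condition is `Π_{T+1}^{(K)} = ℙ(X_1 = · | Y_1^{(K)} = y_1^{(K)})`, and it
satisfies the Markov recursion: `Π_{t+1}^{(K)}[δ_{t+1}^{(K)}](x_{t-T+1})` is the
normalization over `x_{t-T+1}` of
`Σ_{x_{t-T}} s_{t-T+1}(x_{t-T+1} | x_{t-T}, u_{t-T}^{(K)})
 · Π_{k=1}^K q_{t-T+1}^k(y_{t-T+1}^k | x_{t-T+1}, u_{t-T}^{(K)}) · Π_t^{(K)}[δ_t^{(K)}](x_{t-T})`,
depending only on the actions `u_{t-T}^{(K)}` and the new shared observations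
`y_{t-T+1}^{(K)}`, not on the strategies.  (In the 0-based encoding the paper's time
`t ∈ {T+1,…,n}` is `t ∈ {T,…,n-1 }`, `X_{t-T}` has index `t - T`, the action
`u_{t-T}^{(K)}` index `t - T`, and the new observation index `t - T + 1`.) -/
theorem centralized_posterior_Pi_recursion
    {X : Type} [Fintype X] [DecidableEq X] [Nonempty X]
    {K : ℕ} {Y U : Fin K → Type}
    [∀ k, Fintype (Y k)] [∀ k, DecidableEq (Y k)] [∀ k, Nonempty (Y k)]
    [∀ k, Fintype (U k)] [∀ k, DecidableEq (U k)] [∀ k, Nonempty (U k)]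
    (n T : ℕ) (hT : 1 ≤ T) (hTn : T ≤ n)
    (M : Kernels X Y U) (hM : M.IsPMF) :
    -- strategy independence
    (∀ (γ₁ γ₂ : Strat Y U), Admissible T γ₁ → Admissible T γ₂ →
      ∀ (t : ℕ) (δy : ℕ → ∀ j, Y j) (δu : ℕ → ∀ j, U j), T ≤ t → t ≤ n →
        0 < Pr n M γ₁ (CommonEq T γ₁ t δy δu) →
        0 < Pr n M γ₂ (CommonEq T γ₂ t δy δu) →
        ∀ x : X, PiPost n T M γ₁ t δy δu x = PiPost n T M γ₂ t δy δu x) ∧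
    -- initial condition `Π_{T+1}^{(K)} = ℙ(X_1 = · | Y_1^{(K)} = y_1^{(K)})`
    (∀ (γ : Strat Y U), Admissible T γ →
      ∀ (δy : ℕ → ∀ j, Y j) (δu : ℕ → ∀ j, U j),
        0 < Pr n M γ (CommonEq T γ T δy δu) →
        ∀ x : X, PiPost n T M γ T δy δu x =
          condPr n M γ (fun ω => stateAt ω 0 = x)
            (fun ω => ∀ j : Fin K, obsAt ω 0 j = δy 0 j)) ∧
    -- Markov recursion, driven only by `u_{t-T}^{(K)}` and `y_{t-T+1}^{(K)}`
    (∀ (γ : Strat Y U), Admissible T γ →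
      ∀ (t : ℕ) (δy : ℕ → ∀ j, Y j) (δu : ℕ → ∀ j, U j), T ≤ t → t < n →
        0 < Pr n M γ (CommonEq T γ (t + 1) δy δu) →
        ∀ x' : X,
          PiPost n T M γ (t + 1) δy δu x' =
            (∑ x : X, M.trans (t - T) x (δu (t - T)) x' *
                (∏ j, M.obs (t - T) j x' (δu (t - T)) (δy (t - T + 1) j)) *
                PiPost n T M γ t δy δu x) /
            (∑ x'' : X, ∑ x : X, M.trans (t - T) x (δu (t - T)) x'' *
                (∏ j, M.obs (t - T) j x'' (δu (t - T)) (δy (t - T + 1) j)) *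
                PiPost n T M γ t δy δu x)) := by
  obtain ⟨independence, initial, recursion⟩ := centralized_posterior_Pi_recursion_general n T M hM
  exact ⟨fun γ₁ γ₂ hγ₁ hγ₂ t δy δu hTt ht =>
      independence γ₁ γ₂ hγ₁.nonAnticipative hγ₂.nonAnticipative t δy δu hTt (by lia),
    fun γ hγ => initial γ hγ.nonAnticipative,
    fun γ hγ t δy δu hTt ht => recursion γ hγ.nonAnticipative t δy δu hTt (by lia)⟩

end DelayedSharing
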